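/- arXiv:2510.15323 — 2 statements merged into one kernel-verified Lean document; each statement's English description precedes it below -/
import Mathlib

section
/- The following conditions are equivalent: (i) the sequence σ_n = √(Var(S_n)) is bounded; (ii) liminf_{n→∞} σ_n < ∞; (iii) for every j > 0 one can write f_j(X_j) = E[f_j(X_j)] + h_j(X_j) − h_{j−1}(X_{j−1}) + M_j(X_{j−1}, X_j) almost surely, where the h_j are measurable and uniformly bounded, (M_j(X_{j−1}, X_j))_{j≥1} is a uniformly bounded martingale-difference sequence with respect to the natural filtration of the chain, and Σ_{j=1}^∞ Var(M_j(X_{j−1}, X_j)) < ∞ (so that Σ_{j=1}^∞ M_j(X_{j−1}, X_j) converges almost surely and in L^p for all 1 ≤ p < ∞). -/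
/-!
The minorization makes conditional expectation over `n₀` steps contract oscillations by the factor
`1 - γ`, so `E[f_{j+k}(X_{j+k}) - E f_{j+k}(X_{j+k}) | X_j]` decays geometrically in `k`, uniformly
in `j`. Its sum over `k ≥ 0` is a bounded function `v_j(X_j)`, and the Markov property gives
Gordin's equation `E[v_{j+1}(X_{j+1}) | X_0, …, X_j] = v_j(X_j) - (f_j(X_j) - E f_j(X_j))`. Hence
`v_{j+1}(X_{j+1}) - E[v_{j+1}(X_{j+1}) | X_0, …, X_j]` is the martingale difference of a bounded
martingale–coboundary decomposition, without any assumption on the variances.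

For every such decomposition `S_n` differs from the martingale by a bounded amount and a constant,
so `Var S_n` is comparable, up to a factor and an additive constant, to the partial sums of
`Var M_j` by orthogonality of the increments. These partial sums are monotone, so that boundedness
along a subsequence is already convergence of the series.
-/

open MeasureTheory ProbabilityTheory Filter
open scoped ENNReal NNReal

noncomputable section

variable {Ω : Type*} [MeasurableSpace Ω] {𝒳 : ℕ → Type*} [∀ j, MeasurableSpace (𝒳 j)]

/-- The σ-algebra generated by `X_0, …, X_j`. -/
def pastSigma (X : ∀ j, Ω → 𝒳 j) (j : ℕ) : MeasurableSpace Ω :=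
  ⨆ i ∈ Finset.range (j + 1), MeasurableSpace.comap (X i) inferInstance

/-- `X` is an inhomogeneous Markov chain (on the probability space `(Ω, μ)`) whose `n`-step
transition probabilities from time `j` are given by the Markov kernels `κ j n`: for every
measurable `Γ`, `ℙ(X_{j+n} ∈ Γ | X_0, …, X_j) = (κ j n) (X j) Γ` a.s. -/
structure IsInhomMarkov (μ : Measure Ω) (X : ∀ j, Ω → 𝒳 j)
    (κ : ∀ j n, Kernel (𝒳 j) (𝒳 (j + n))) : Prop where
  meas : ∀ j, Measurable (X j)
  isMarkovKernel : ∀ j n, IsMarkovKernel (κ j n)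
  cond : ∀ j n (Γ : Set (𝒳 (j + n))), MeasurableSet Γ →
    (μ[(fun ω => Γ.indicator (fun _ => (1 : ℝ)) (X (j + n) ω)) | pastSigma X j])
      =ᵐ[μ] fun ω => (κ j n (X j ω) Γ).toReal

section Real

lemma summable_pow_div {ρ : ℝ} (hρ₀ : 0 ≤ ρ) (hρ₁ : ρ < 1) {n : ℕ} (hn : n ≠ 0) :
    Summable fun k : ℕ ↦ ρ ^ (k / n) := by
  have : NeZero n := ⟨hn⟩
  have hprod : Summable fun p : ℕ × Fin n ↦ ρ ^ p.1 * 1 :=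
    (summable_geometric_of_lt_one hρ₀ hρ₁).mul_of_nonneg (Summable.of_finite (f := fun _ ↦ 1))
      (fun k ↦ pow_nonneg hρ₀ k) fun _ ↦ zero_le_one
  simpa only [Function.comp_def, mul_one, Nat.divModEquiv_apply] using
    (Nat.divModEquiv n).summable_iff.2 hprod

lemma tfae_bounded_sqrt_liminf_summable {v d : ℕ → ℝ} {K : ℝ} (hd : ∀ j, 0 ≤ d j)
    (hvd : ∀ n, v (n + 1) ≤ 2 * ∑ j ∈ Finset.range n, d j + K)
    (hdv : ∀ n, ∑ j ∈ Finset.range n, d j ≤ 2 * v (n + 1) + K) :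
    List.TFAE [∃ B, ∀ n, √(v n) ≤ B, atTop.liminf (fun n ↦ ENNReal.ofReal √(v n)) < ⊤,
      Summable d] := by
  tfae_have 1 → 2 := fun ⟨B, hB⟩ ↦
    (liminf_le_of_frequently_le' <| .of_forall fun n ↦ ENNReal.ofReal_le_ofReal (hB n)).trans_lt
      ENNReal.ofReal_lt_top
  tfae_have 2 → 3 := fun hlim ↦ by
    obtain ⟨b, hb, -⟩ := ENNReal.lt_iff_exists_nnreal_btwn.1 hlim
    have hfreq := frequently_atTop.1 (frequently_lt_of_liminf_lt (by isBoundedDefault) hb)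
    refine summable_of_sum_range_le (c := 2 * (b : ℝ) ^ 2 + K) hd fun N ↦ ?_
    obtain ⟨n, hn, hnb⟩ := hfreq (N + 1)
    obtain ⟨n, rfl⟩ := Nat.exists_eq_add_of_lt hn
    have hv : v (N + n + 1) ≤ (b : ℝ) ^ 2 := (Real.sqrt_le_left b.2).1
      ((ENNReal.ofReal_lt_coe_iff (Real.sqrt_nonneg _)).1 hnb).le
    calc ∑ j ∈ Finset.range N, d j
      _ ≤ ∑ j ∈ Finset.range (N + n), d j :=
          Finset.sum_le_sum_of_subset_of_nonneg (Finset.range_mono (N.le_add_right n))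
            fun j _ _ ↦ hd j
      _ ≤ 2 * v (N + n + 1) + K := hdv _
      _ ≤ 2 * (b : ℝ) ^ 2 + K := by gcongr
  tfae_have 3 → 1 := fun hsum ↦ by
    refine ⟨max √(v 0) √(2 * ∑' j, d j + K), fun n ↦ ?_⟩
    rcases n with - | n
    · exact le_max_left _ _
    · refine le_max_of_le_right (Real.sqrt_le_sqrt ((hvd n).trans ?_))
      gcongr
      exact hsum.sum_le_tsum _ fun j _ ↦ hd j
  tfae_finish

end Real

section Variance

variable {α : Type*} {m' m₀ : MeasurableSpace α} {μ : Measure α}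

lemma variance_add_le_two_mul [IsFiniteMeasure μ] {Y Z : α → ℝ} (hY : MemLp Y 2 μ)
    (hZ : MemLp Z 2 μ) : Var[Y + Z; μ] ≤ 2 * Var[Y; μ] + 2 * Var[Z; μ] := by
  linarith [variance_add hY hZ, variance_sub hY hZ, variance_nonneg (Y - Z) μ]

lemma variance_sub_le_two_mul [IsFiniteMeasure μ] {Y Z : α → ℝ} (hY : MemLp Y 2 μ)
    (hZ : MemLp Z 2 μ) : Var[Y - Z; μ] ≤ 2 * Var[Y; μ] + 2 * Var[Z; μ] := by
  linarith [variance_add hY hZ, variance_sub hY hZ, variance_nonneg (Y + Z) μ]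

variable [IsProbabilityMeasure μ]

lemma covariance_eq_zero_of_condExp_ae_eq_zero (hm' : m' ≤ m₀) {Y D : α → ℝ}
    (hYm : StronglyMeasurable[m'] Y) (hY : MemLp Y 2 μ) (hD : MemLp D 2 μ)
    (hD0 : μ[D | m'] =ᵐ[μ] 0) : cov[Y, D; μ] = 0 := by
  have hmean : μ[D] = 0 := by
    rw [← integral_condExp hm', integral_congr_ae hD0, Pi.zero_def, integral_zero]
  have hprod : μ[Y * D] = 0 := by
    rw [← integral_condExp hm']
    refine integral_eq_zero_of_ae ((condExp_mul_of_stronglyMeasurable_left hYm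
      (hY.integrable_mul hD) (hD.integrable one_le_two)).trans ?_)
    filter_upwards [hD0] with ω hω
    simp only [Pi.mul_apply, hω, Pi.zero_apply, mul_zero]
  rw [covariance_eq_sub hY hD, hmean, hprod, mul_zero, sub_zero]

lemma variance_sum_range_of_condExp_ae_eq_zero {ℱ : Filtration ℕ m₀} {D : ℕ → α → ℝ}
    (hDm : ∀ j, StronglyMeasurable[ℱ (j + 1)] (D j)) (hD : ∀ j, MemLp (D j) 2 μ)
    (hD0 : ∀ j, μ[D j | ℱ j] =ᵐ[μ] 0) (n : ℕ) :
    Var[∑ j ∈ Finset.range n, D j; μ] = ∑ j ∈ Finset.range n, Var[D j; μ] := by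
  induction n with
  | zero => simp only [Finset.range_zero, Finset.sum_empty, variance_zero]
  | succ n ih =>
    have hsum : MemLp (∑ j ∈ Finset.range n, D j) 2 μ := memLp_finsetSum' _ fun j _ ↦ hD j
    have hsum_meas : StronglyMeasurable[ℱ n] (∑ j ∈ Finset.range n, D j) :=
      Finset.stronglyMeasurable_sum _ fun j hj ↦
        (hDm j).mono (ℱ.mono (Finset.mem_range.1 hj))
    rw [Finset.sum_range_succ, Finset.sum_range_succ, variance_add hsum (hD n), ih,
      covariance_eq_zero_of_condExp_ae_eq_zero (ℱ.le n) hsum_meas hsum (hD n) (hD0 n), mul_zero,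
      add_zero]

end Variance

section CondExp

variable {α : Type*} {m₀ : MeasurableSpace α} {μ : Measure α} [IsFiniteMeasure μ]

-- Conditioning on `ℱ j` shifts each summand: `μ[μ[G (j + 1 + k) | ℱ (j + 1)] | ℱ j]` is the
-- summand of index `k + 1` at time `j`.
lemma condExp_tsum_succ_ae_eq {ℱ : Filtration ℕ m₀} {G : ℕ → α → ℝ} {Z : ℕ → ℕ → α → ℝ} {r : ℕ → ℝ}
    (hr : Summable r) (hZr : ∀ j k, ∀ᵐ ω ∂μ, |Z j k ω| ≤ r k)
    (hZ : ∀ j k, Z j k =ᵐ[μ] μ[G (j + k) | ℱ j]) (j : ℕ) :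
    μ[fun ω ↦ ∑' k, Z (j + 1) k ω | ℱ j] =ᵐ[μ] fun ω ↦ ∑' k, Z j k ω - Z j 0 ω := by
  have htower (k : ℕ) : μ[Z (j + 1) k | ℱ j] =ᵐ[μ] Z j (k + 1) := by
    refine (condExp_congr_ae (hZ (j + 1) k)).trans ((condExp_condExp_of_le
      (ℱ.mono j.le_succ) (ℱ.le (j + 1))).trans ?_)
    rw [add_right_comm j 1 k]
    exact (hZ j (k + 1)).symm
  have hmeas (k : ℕ) : AEStronglyMeasurable (Z (j + 1) k) μ :=
    (integrable_condExp.congr (hZ (j + 1) k).symm).aestronglyMeasurable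
  have hfin : ∑' k, ∫⁻ ω, ‖Z (j + 1) k ω‖ₑ ∂μ ≠ ⊤ := by
    refine ne_top_of_le_ne_top (b := ∑' k, ENNReal.ofReal (r k) * μ Set.univ) ?_
      (ENNReal.tsum_le_tsum fun k ↦ ?_)
    · rw [ENNReal.tsum_mul_right]
      exact ENNReal.mul_ne_top hr.tsum_ofReal_ne_top (measure_ne_top _ _)
    · rw [← lintegral_const]
      refine lintegral_mono_ae ?_
      filter_upwards [hZr (j + 1) k] with ω hω
      rw [Real.enorm_eq_ofReal_abs]
      exact ENNReal.ofReal_le_ofReal hω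
  refine (condExp_tsum hmeas hfin).trans ?_
  filter_upwards [ae_all_iff.2 htower, ae_all_iff.2 (hZr j)] with ω hω hωr
  have hsum : Summable fun k ↦ Z j k ω := .of_norm_bounded hr hωr
  rw [hsum.tsum_eq_zero_add, add_sub_cancel_left]
  exact tsum_congr hω

end CondExp

section ConditionalKernel

variable {α E F G : Type*} {m' m₀ : MeasurableSpace α} {μ : Measure α} [IsFiniteMeasure μ]
  [MeasurableSpace E] [MeasurableSpace F] {κ : Kernel E F} [IsMarkovKernel κ] {Y : α → E}
  {W : α → F}

lemma map_restrict_eq_comp_of_condExp_indicator (hm' : m' ≤ m₀) (hY : Measurable Y)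
    (hW : Measurable W)
    (hκ : ∀ Γ, MeasurableSet Γ → μ⟦W ⁻¹' Γ | m'⟧ =ᵐ[μ] fun ω ↦ (κ (Y ω) Γ).toReal)
    {s : Set α} (hs : MeasurableSet[m'] s) :
    (μ.restrict s).map W = κ ∘ₘ (μ.restrict s).map Y := by
  ext Γ hΓ
  have hΓW : MeasurableSet (W ⁻¹' Γ) := hW hΓ
  have hκΓ : Measurable fun y ↦ κ y Γ := κ.measurable_coe hΓ
  have hκY : Measurable fun ω ↦ κ (Y ω) Γ := hκΓ.comp hY
  refine (ENNReal.toReal_eq_toReal_iff' (measure_ne_top _ _) (measure_ne_top _ _)).1 ?_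
  calc ((μ.restrict s).map W Γ).toReal
    _ = ∫ ω in s, (W ⁻¹' Γ).indicator (fun _ ↦ (1 : ℝ)) ω ∂μ := by
        rw [Measure.map_apply hW hΓ]
        exact (integral_indicator_one hΓW).symm
    _ = ∫ ω in s, (μ⟦W ⁻¹' Γ | m'⟧) ω ∂μ :=
        (setIntegral_condExp hm' ((integrable_const 1).indicator hΓW) hs).symm
    _ = ∫ ω in s, (κ (Y ω) Γ).toReal ∂μ := integral_congr_ae (ae_restrict_of_ae (hκ Γ hΓ))
    _ = ((κ ∘ₘ (μ.restrict s).map Y) Γ).toReal := by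
        rw [integral_toReal hκY.aemeasurable (ae_of_all _ fun ω ↦ measure_lt_top _ _),
          Measure.bind_apply hΓ κ.aemeasurable, lintegral_map hκΓ hY]

lemma condExp_comp_ae_eq_integral_kernel [NormedAddCommGroup G] [NormedSpace ℝ G]
    [CompleteSpace G] (hm' : m' ≤ m₀) (hY : Measurable[m'] Y) (hW : Measurable W)
    (hκ : ∀ Γ, MeasurableSet Γ → μ⟦W ⁻¹' Γ | m'⟧ =ᵐ[μ] fun ω ↦ (κ (Y ω) Γ).toReal)
    {φ : F → G} (hφ : StronglyMeasurable φ) (hφW : Integrable (φ ∘ W) μ) :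
    μ[φ ∘ W | m'] =ᵐ[μ] fun ω ↦ ∫ y, φ y ∂κ (Y ω) := by
  have hY₀ : Measurable Y := hY.mono hm' le_rfl
  have hκφ : StronglyMeasurable fun x ↦ ∫ y, φ y ∂κ x := hφ.integral_kernel
  have hmap {s : Set α} (hs : MeasurableSet[m'] s) :
      (κ ∘ₖ Kernel.const Unit ((μ.restrict s).map Y)) () = (μ.restrict s).map W := by
    rw [← Measure.comp_eq_comp_const_apply]
    exact (map_restrict_eq_comp_of_condExp_indicator hm' hY₀ hW hκ hs).symm
  have hφi {s : Set α} (hs : MeasurableSet[m'] s) :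
      Integrable φ ((κ ∘ₖ Kernel.const Unit ((μ.restrict s).map Y)) ()) := by
    rw [hmap hs, integrable_map_measure hφ.aestronglyMeasurable hW.aemeasurable]
    exact hφW.integrableOn
  refine (ae_eq_condExp_of_forall_setIntegral_eq hm' hφW (fun s hs _ ↦ ?_) (fun s hs _ ↦ ?_)
    (hκφ.comp_measurable hY).aestronglyMeasurable).symm
  · exact (hφi hs).integral_comp.comp_measurable hY₀
  · calc ∫ ω in s, ∫ y, φ y ∂κ (Y ω) ∂μ
      _ = ∫ x, ∫ y, φ y ∂κ x ∂(μ.restrict s).map Y :=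
          (integral_map hY₀.aemeasurable hκφ.aestronglyMeasurable).symm
      _ = ∫ y, φ y ∂(μ.restrict s).map W := by
          rw [← hmap hs, Kernel.integral_comp (hφi hs), Kernel.const_apply]
      _ = ∫ ω in s, (φ ∘ W) ω ∂μ := integral_map hW.aemeasurable hφ.aestronglyMeasurable

end ConditionalKernel

section Minorization

variable {E : Type*} [MeasurableSpace E]

lemma integral_mem_Icc_of_minorization {ν m : Measure E} [IsProbabilityMeasure ν]
    [IsProbabilityMeasure m] {γ : ℝ} (hγ : 0 ≤ γ) (hm : ENNReal.ofReal γ • m ≤ ν) {φ : E → ℝ}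
    (hφ : Measurable φ) {a b : ℝ} (hab : ∀ x, φ x ∈ Set.Icc a b) :
    ∫ x, φ x ∂ν ∈ Set.Icc (γ * ∫ x, φ x ∂m + (1 - γ) * a) (γ * ∫ x, φ x ∂m + (1 - γ) * b) := by
  have hi (ρ : Measure E) [IsProbabilityMeasure ρ] : Integrable φ ρ :=
    .of_mem_Icc a b hφ.aemeasurable (ae_of_all _ hab)
  have hlow := integral_mono_measure hm (f := fun x ↦ φ x - a)
    (ae_of_all _ fun x ↦ sub_nonneg.2 (hab x).1) ((hi ν).sub (integrable_const a))
  have hup := integral_mono_measure hm (f := fun x ↦ b - φ x)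
    (ae_of_all _ fun x ↦ sub_nonneg.2 (hab x).2) ((integrable_const b).sub (hi ν))
  rw [integral_smul_measure, ENNReal.toReal_ofReal hγ, smul_eq_mul] at hlow hup
  rw [integral_sub (hi m) (integrable_const a), integral_sub (hi ν) (integrable_const a)] at hlow
  rw [integral_sub (integrable_const b) (hi m), integral_sub (integrable_const b) (hi ν)] at hup
  simp only [integral_const, probReal_univ, one_smul] at hlow hup
  constructor <;> linarith

end Minorization

section Oscillation

variable {α E F : Type*} {m' m₀ : MeasurableSpace α} {μ : Measure α} [MeasurableSpace E]
  [MeasurableSpace F] {Y : α → E} {W : α → F} {Z Z' : α → ℝ} {δ : ℝ}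

/-- The random variable `Z` is almost surely equal to `φ ∘ Y` for a measurable `φ` of oscillation
at most `δ`. The oscillation is expressed by an interval `[a, a + δ]` containing all the values of
`φ`, so that it makes sense for representatives rather than almost everywhere classes. -/
def HasVersionOfOscLE (μ : Measure α) (Y : α → E) (Z : α → ℝ) (δ : ℝ) : Prop :=
  ∃ (φ : E → ℝ) (a : ℝ), Measurable φ ∧ (∀ x, φ x ∈ Set.Icc a (a + δ)) ∧ Z =ᵐ[μ] φ ∘ Y

namespace HasVersionOfOscLE

lemma congr_ae (hZ : HasVersionOfOscLE μ Y Z δ) (h : Z =ᵐ[μ] Z') : HasVersionOfOscLE μ Y Z' δ := by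
  obtain ⟨φ, a, hφ, hφa, hZφ⟩ := hZ
  exact ⟨φ, a, hφ, hφa, h.symm.trans hZφ⟩

lemma comp_sub_const {f : E → ℝ} (hf : Measurable f) {C : ℝ} (hC : 0 ≤ C)
    (hfC : ∀ᵐ ω ∂μ, |f (Y ω)| ≤ C) (c : ℝ) :
    HasVersionOfOscLE μ Y (fun ω ↦ f (Y ω) - c) (2 * C) := by
  refine ⟨fun x ↦ max (-C) (min C (f x)) - c, -C - c,
    (measurable_const.max (measurable_const.min hf)).sub_const c, fun x ↦ ⟨?_, ?_⟩, ?_⟩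
  · exact sub_le_sub_right (le_max_left _ _) c
  · have : max (-C) (min C (f x)) ≤ C := max_le (neg_le_self hC) (min_le_left _ _)
    linarith
  · filter_upwards [hfC] with ω hω
    rw [Function.comp_apply, min_eq_right (abs_le.1 hω).2, max_eq_right (abs_le.1 hω).1]

lemma exists_abs_le_of_integral_eq_zero [IsProbabilityMeasure μ] (hY : Measurable Y)
    (hZ : HasVersionOfOscLE μ Y Z δ) (hZ0 : μ[Z] = 0) :
    ∃ φ : E → ℝ, Measurable φ ∧ (∀ x, |φ x| ≤ δ) ∧ φ ∘ Y =ᵐ[μ] Z := by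
  obtain ⟨φ, a, hφ, hφa, hZφ⟩ := hZ
  have hφY : Integrable (φ ∘ Y) μ :=
    .of_mem_Icc a (a + δ) (hφ.comp hY).aemeasurable (ae_of_all _ fun ω ↦ hφa (Y ω))
  have hmean : μ[φ ∘ Y] ∈ Set.Icc a (a + δ) :=
    ⟨by simpa using integral_mono (integrable_const a) hφY fun ω ↦ (hφa (Y ω)).1,
      by simpa using integral_mono hφY (integrable_const (a + δ)) fun ω ↦ (hφa (Y ω)).2⟩
  rw [← integral_congr_ae hZφ, hZ0] at hmean
  refine ⟨φ, hφ, fun x ↦ abs_le.2 ⟨?_, ?_⟩, hZφ.symm⟩ <;>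
    linarith [(hφa x).1, (hφa x).2, hmean.1, hmean.2]

lemma condExp [IsFiniteMeasure μ] {κ : Kernel E F} [IsMarkovKernel κ] (hm' : m' ≤ m₀)
    (hY : Measurable[m'] Y) (hW : Measurable W)
    (hκ : ∀ Γ, MeasurableSet Γ → μ⟦W ⁻¹' Γ | m'⟧ =ᵐ[μ] fun ω ↦ (κ (Y ω) Γ).toReal)
    {γ : ℝ} (hγ : 0 ≤ γ) {m : Measure F} [IsProbabilityMeasure m]
    (hm : ∀ x, ENNReal.ofReal γ • m ≤ κ x) (hZ : HasVersionOfOscLE μ W Z δ) :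
    HasVersionOfOscLE μ Y (μ[Z | m']) ((1 - γ) * δ) := by
  obtain ⟨φ, a, hφ, hφa, hZφ⟩ := hZ
  have hφW : Integrable (φ ∘ W) μ :=
    .of_mem_Icc a (a + δ) (hφ.comp hW).aemeasurable (ae_of_all _ fun ω ↦ hφa (W ω))
  refine ⟨fun x ↦ ∫ y, φ y ∂κ x, γ * ∫ y, φ y ∂m + (1 - γ) * a,
    hφ.stronglyMeasurable.integral_kernel.measurable, fun x ↦ ?_,
    (condExp_congr_ae hZφ).trans
      (condExp_comp_ae_eq_integral_kernel hm' hY hW hκ hφ.stronglyMeasurable hφW)⟩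
  rw [add_assoc, ← mul_add]
  exact integral_mem_Icc_of_minorization hγ (hm x) hφ hφa

end HasVersionOfOscLE

end Oscillation

section Markov

variable {μ : Measure Ω} {X : ∀ j, Ω → 𝒳 j} {κ : ∀ j n, Kernel (𝒳 j) (𝒳 (j + n))}

lemma pastSigma_mono {α : Type*} (X : ∀ j, α → 𝒳 j) : Monotone (pastSigma X) :=
  fun _ _ hij ↦ biSup_mono fun _ hi ↦ Finset.range_mono (Nat.succ_le_succ hij) hi

lemma pastSigma_le (hX : ∀ j, Measurable (X j)) (j : ℕ) : pastSigma X j ≤ ‹MeasurableSpace Ω› :=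
  iSup₂_le fun i _ ↦ (hX i).comap_le

lemma measurable_pastSigma {α : Type*} (X : ∀ j, α → 𝒳 j) {i j : ℕ} (hij : i ≤ j) :
    Measurable[pastSigma X j] (X i) :=
  .of_comap_le <| le_biSup (fun i ↦ MeasurableSpace.comap (X i) inferInstance)
    (Finset.mem_range.2 (Nat.lt_succ_of_le hij))

/-- The natural filtration `σ(X_0, …, X_j)` of the chain. Mathlib's `Filtration.natural` requires
all the variables to have the same, metrizable, state space. -/
def pastFiltration (X : ∀ j, Ω → 𝒳 j) (hX : ∀ j, Measurable (X j)) :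
    Filtration ℕ ‹MeasurableSpace Ω› where
  seq := pastSigma X
  mono' := pastSigma_mono X
  le' := pastSigma_le hX

namespace IsInhomMarkov

lemma hasVersionOfOscLE_condExp [IsFiniteMeasure μ] (hX : IsInhomMarkov μ X κ) {j n : ℕ}
    {γ : ℝ} (hγ : 0 ≤ γ) {m : Measure (𝒳 (j + n))} [IsProbabilityMeasure m]
    (hm : ∀ x, ENNReal.ofReal γ • m ≤ κ j n x) {Z : Ω → ℝ} {δ : ℝ}
    (hZ : HasVersionOfOscLE μ (X (j + n)) Z δ) :
    HasVersionOfOscLE μ (X j) (μ[Z | pastSigma X j]) ((1 - γ) * δ) :=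
  have := hX.isMarkovKernel j n
  hZ.condExp (pastSigma_le hX.meas j) (measurable_pastSigma X le_rfl) (hX.meas _)
    (hX.cond j n) hγ hm

variable [IsProbabilityMeasure μ] {n₀ : ℕ} {γ : ℝ} {m : ∀ j, Measure (𝒳 j)}
  [∀ j, IsProbabilityMeasure (m j)]

lemma hasVersionOfOscLE_condExp_pow (hX : IsInhomMarkov μ X κ) (hγ : 0 ≤ γ)
    (hm : ∀ j x, ENNReal.ofReal γ • m (j + n₀) ≤ κ j n₀ x) {i j q : ℕ} (hij : j + q * n₀ ≤ i)
    {Z : Ω → ℝ} {δ : ℝ} (hZ : HasVersionOfOscLE μ (X i) Z δ) :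
    HasVersionOfOscLE μ (X j) (μ[Z | pastSigma X j]) ((1 - γ) ^ q * δ) := by
  induction q generalizing j with
  | zero =>
    obtain ⟨n, rfl⟩ := Nat.exists_eq_add_of_le hij
    rw [zero_mul, add_zero] at hZ
    -- Non-expansion over any number of steps is the contraction with `γ = 0`.
    simpa only [sub_zero, pow_zero] using
      hX.hasVersionOfOscLE_condExp le_rfl (m := m (j + n)) (fun x ↦ by simp [Measure.zero_le]) hZ
  | succ q ih =>
    rw [Nat.succ_mul, ← add_assoc, add_right_comm] at hij
    have hstep := hX.hasVersionOfOscLE_condExp hγ (hm j) (ih hij)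
    rw [← mul_assoc, ← pow_succ'] at hstep
    exact hstep.congr_ae <| condExp_condExp_of_le (pastSigma_mono X (Nat.le_add_right j n₀))
      (pastSigma_le hX.meas (j + n₀))

lemma exists_summable_forall_condExp_version (hX : IsInhomMarkov μ X κ) (hn₀ : n₀ ≠ 0)
    (hγ : γ ∈ Set.Ioo 0 1) (hm : ∀ j x, ENNReal.ofReal γ • m (j + n₀) ≤ κ j n₀ x)
    {f : ∀ j, 𝒳 j → ℝ} (hf : ∀ j, Measurable (f j)) {C : ℝ}
    (hfC : ∀ j, ∀ᵐ ω ∂μ, |f j (X j ω)| ≤ C) :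
    ∃ r : ℕ → ℝ, Summable r ∧ ∀ j k, ∃ φ : 𝒳 j → ℝ, Measurable φ ∧ (∀ x, |φ x| ≤ r k) ∧
      φ ∘ X j =ᵐ[μ]
        μ[fun ω ↦ f (j + k) (X (j + k) ω) - ∫ ω', f (j + k) (X (j + k) ω') ∂μ | pastSigma X j] := by
  have hC : 0 ≤ C := (hfC 0).exists.elim fun ω hω ↦ (abs_nonneg _).trans hω
  refine ⟨fun k ↦ (1 - γ) ^ (k / n₀) * (2 * C), (summable_pow_div (sub_nonneg.2 hγ.2.le)
    (sub_lt_self 1 hγ.1) hn₀).mul_right _, fun j k ↦ ?_⟩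
  have hosc := hX.hasVersionOfOscLE_condExp_pow hγ.1.le hm
    (Nat.add_le_add_left (Nat.div_mul_le_self k n₀) j)
    (.comp_sub_const (hf (j + k)) hC (hfC (j + k)) (∫ ω, f (j + k) (X (j + k) ω) ∂μ))
  refine hosc.exists_abs_le_of_integral_eq_zero (hX.meas j) ?_
  have hfi : Integrable (fun ω ↦ f (j + k) (X (j + k) ω)) μ :=
    .of_bound ((hf _).comp (hX.meas _)).aestronglyMeasurable C (hfC _)
  rw [integral_condExp (pastSigma_le hX.meas j), integral_sub hfi (integrable_const _)]
  simp only [integral_const, probReal_univ, one_smul, sub_self]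

end IsInhomMarkov

end Markov

section MartingaleCoboundary

variable {μ : Measure Ω} {X : ∀ j, Ω → 𝒳 j}

/-- A martingale–coboundary decomposition of the centered sequence `f_j(X_j) - E[f_j(X_j)]`, for
`j ≥ 1`: bounded measurable `h_j`, and bounded martingale differences with respect to the natural
filtration. The martingale difference `M_{j+1}(X_j, X_{j+1})` of the paper is `M j` here. -/
structure IsMartingaleCoboundary (μ : Measure Ω) (X : ∀ j, Ω → 𝒳 j) (f h : ∀ j, 𝒳 j → ℝ)
    (M : ∀ j, 𝒳 j × 𝒳 (j + 1) → ℝ) : Prop where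
  measurable_h : ∀ j, Measurable (h j)
  bounded_h : ∃ B, ∀ j x, |h j x| ≤ B
  measurable_M : ∀ j, Measurable (M j)
  bounded_M : ∃ B, ∀ j p, |M j p| ≤ B
  condExp_ae_eq_zero : ∀ j, μ[fun ω ↦ M j (X j ω, X (j + 1) ω) | pastSigma X j] =ᵐ[μ] 0
  ae_eq : ∀ j, ∀ᵐ ω ∂μ, f (j + 1) (X (j + 1) ω) =
    (∫ ω', f (j + 1) (X (j + 1) ω') ∂μ) + h (j + 1) (X (j + 1) ω) - h j (X j ω)
      + M j (X j ω, X (j + 1) ω)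

variable {f h : ∀ j, 𝒳 j → ℝ} {M : ∀ j, 𝒳 j × 𝒳 (j + 1) → ℝ}

lemma IsMartingaleCoboundary.sum_range_succ_ae_eq (hM : IsMartingaleCoboundary μ X f h M) (n : ℕ) :
    ∀ᵐ ω ∂μ, ∑ j ∈ Finset.range (n + 1), f j (X j ω) =
      ∑ j ∈ Finset.range n, M j (X j ω, X (j + 1) ω) + (f 0 (X 0 ω) + (h n (X n ω) - h 0 (X 0 ω))) +
        ∑ j ∈ Finset.range n, ∫ ω', f (j + 1) (X (j + 1) ω') ∂μ := by
  filter_upwards [ae_all_iff.2 hM.ae_eq] with ω hω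
  rw [Finset.sum_range_succ', ← Finset.sum_range_sub (fun j ↦ h j (X j ω)),
    Finset.sum_congr rfl fun j _ ↦ hω j]
  simp only [Finset.sum_add_distrib, Finset.sum_sub_distrib]
  ring

variable [IsProbabilityMeasure μ]

lemma isMartingaleCoboundary_of_condExp_ae_eq (hX : ∀ j, Measurable (X j)) {g v : ∀ j, 𝒳 j → ℝ}
    {A B : ℝ} (hg : ∀ j, Measurable (g j)) (hgA : ∀ j x, |g j x| ≤ A) (hv : ∀ j, Measurable (v j))
    (hvB : ∀ j x, |v j x| ≤ B)
    (hgf : ∀ j, ∀ᵐ ω ∂μ, g j (X j ω) = f j (X j ω) - ∫ ω', f j (X j ω') ∂μ)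
    (hvg : ∀ j, μ[fun ω ↦ v (j + 1) (X (j + 1) ω) | pastSigma X j] =ᵐ[μ]
      fun ω ↦ v j (X j ω) - g j (X j ω)) :
    IsMartingaleCoboundary μ X f (fun j x ↦ g j x - v j x)
      (fun j p ↦ v (j + 1) p.2 - (v j p.1 - g j p.1)) where
  measurable_h j := (hg j).sub (hv j)
  bounded_h := ⟨A + B, fun j x ↦ (abs_sub _ _).trans (add_le_add (hgA j x) (hvB j x))⟩
  measurable_M j :=
    ((hv (j + 1)).comp measurable_snd).sub (((hv j).sub (hg j)).comp measurable_fst)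
  bounded_M := ⟨B + (B + A), fun j p ↦ (abs_sub _ _).trans <| add_le_add (hvB (j + 1) p.2) <|
    (abs_sub _ _).trans (add_le_add (hvB j p.1) (hgA j p.1))⟩
  condExp_ae_eq_zero j := by
    have hvi (i : ℕ) : Integrable (fun ω ↦ v i (X i ω)) μ :=
      .of_bound ((hv i).comp (hX i)).aestronglyMeasurable B (ae_of_all _ fun ω ↦ hvB i (X i ω))
    have hgi : Integrable (fun ω ↦ g j (X j ω)) μ :=
      .of_bound ((hg j).comp (hX j)).aestronglyMeasurable A (ae_of_all _ fun ω ↦ hgA j (X j ω))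
    have hself : μ[fun ω ↦ v j (X j ω) - g j (X j ω) | pastSigma X j] =
        fun ω ↦ v j (X j ω) - g j (X j ω) :=
      condExp_of_stronglyMeasurable (pastSigma_le hX j) (((hv j).sub (hg j)).comp
        (measurable_pastSigma X le_rfl)).stronglyMeasurable ((hvi j).sub hgi)
    refine (condExp_sub (hvi (j + 1)) ((hvi j).sub hgi) _).trans ?_
    filter_upwards [hvg j] with ω hω
    rw [Pi.sub_apply, hω, Pi.zero_apply, sub_eq_zero]
    exact (congrFun hself ω).symm
  ae_eq j := by
    filter_upwards [hgf (j + 1)] with ω hω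
    linarith

lemma exists_isMartingaleCoboundary (hX : ∀ j, Measurable (X j)) (hf : ∀ j, Measurable (f j))
    (hfi : ∀ j, Integrable (fun ω ↦ f j (X j ω)) μ) {r : ℕ → ℝ} (hr : Summable r)
    {φ : ∀ j, ℕ → 𝒳 j → ℝ} (hφ : ∀ j k, Measurable (φ j k)) (hφr : ∀ j k x, |φ j k x| ≤ r k)
    (hφf : ∀ j k, φ j k ∘ X j =ᵐ[μ]
      μ[fun ω ↦ f (j + k) (X (j + k) ω) - ∫ ω', f (j + k) (X (j + k) ω') ∂μ | pastSigma X j]) :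
    ∃ h M, IsMartingaleCoboundary μ X f h M := by
  have hφ₀ (j : ℕ) : φ j 0 ∘ X j =ᵐ[μ] fun ω ↦ f j (X j ω) - ∫ ω', f j (X j ω') ∂μ := by
    refine (hφf j 0).trans (ae_of_all _ fun ω ↦ congrFun (condExp_of_stronglyMeasurable
      (pastSigma_le hX j) ?_ ((hfi j).sub (integrable_const _))) ω)
    exact (((hf j).comp (measurable_pastSigma X le_rfl)).sub_const _).stronglyMeasurable
  have hφ_tsum (j : ℕ) (x : 𝒳 j) : ‖∑' k, φ j k x‖ ≤ ∑' k, r k :=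
    tsum_of_norm_bounded hr.hasSum fun k ↦ hφr j k x
  exact ⟨_, _, isMartingaleCoboundary_of_condExp_ae_eq hX (v := fun j x ↦ ∑' k, φ j k x)
    (fun j ↦ hφ j 0) (fun j ↦ hφr j 0) (fun j ↦ .tsum (hφ j))
    hφ_tsum hφ₀ (condExp_tsum_succ_ae_eq (ℱ := pastFiltration X hX)
      (G := fun j ω ↦ f j (X j ω) - ∫ ω', f j (X j ω') ∂μ) (Z := fun j k ↦ φ j k ∘ X j) hr
      (fun j k ↦ ae_of_all _ fun ω ↦ hφr j k (X j ω)) hφf)⟩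

namespace IsMartingaleCoboundary

lemma memLp (hM : IsMartingaleCoboundary μ X f h M) (hX : ∀ j, Measurable (X j)) (p : ℝ≥0∞)
    (j : ℕ) : MemLp (fun ω ↦ M j (X j ω, X (j + 1) ω)) p μ :=
  have ⟨B, hB⟩ := hM.bounded_M
  .of_bound ((hM.measurable_M j).comp ((hX j).prodMk (hX (j + 1)))).aestronglyMeasurable B
    (ae_of_all _ fun _ ↦ hB j _)

lemma variance_sum_range (hM : IsMartingaleCoboundary μ X f h M) (hX : ∀ j, Measurable (X j))
    (n : ℕ) : Var[∑ j ∈ Finset.range n, fun ω ↦ M j (X j ω, X (j + 1) ω); μ] =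
      ∑ j ∈ Finset.range n, Var[fun ω ↦ M j (X j ω, X (j + 1) ω); μ] :=
  variance_sum_range_of_condExp_ae_eq_zero (ℱ := pastFiltration X hX)
    (fun j ↦ ((hM.measurable_M j).comp ((measurable_pastSigma X j.le_succ).prodMk
      (measurable_pastSigma X le_rfl))).stronglyMeasurable)
    (hM.memLp hX 2) hM.condExp_ae_eq_zero n

lemma exists_variance_le (hM : IsMartingaleCoboundary μ X f h M) (hX : ∀ j, Measurable (X j))
    (hf₀ : MemLp (fun ω ↦ f 0 (X 0 ω)) 2 μ) :
    ∃ K, ∀ n,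
      Var[fun ω ↦ ∑ j ∈ Finset.range (n + 1), f j (X j ω); μ] ≤
        2 * ∑ j ∈ Finset.range n, Var[fun ω ↦ M j (X j ω, X (j + 1) ω); μ] + K ∧
      ∑ j ∈ Finset.range n, Var[fun ω ↦ M j (X j ω, X (j + 1) ω); μ] ≤
        2 * Var[fun ω ↦ ∑ j ∈ Finset.range (n + 1), f j (X j ω); μ] + K := by
  obtain ⟨A, hA⟩ := hM.bounded_h
  refine ⟨2 * (2 * Var[fun ω ↦ f 0 (X 0 ω); μ] + 2 * (2 * A) ^ 2), fun n ↦ ?_⟩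
  let S : Ω → ℝ := fun ω ↦ ∑ j ∈ Finset.range (n + 1), f j (X j ω)
  let T : Ω → ℝ := ∑ j ∈ Finset.range n, fun ω ↦ M j (X j ω, X (j + 1) ω)
  let Q : Ω → ℝ := fun ω ↦ h n (X n ω) - h 0 (X 0 ω)
  let R : Ω → ℝ := (fun ω ↦ f 0 (X 0 ω)) + Q
  have hQm : Measurable Q :=
    ((hM.measurable_h n).comp (hX n)).sub ((hM.measurable_h 0).comp (hX 0))
  have hQA (ω : Ω) : Q ω ∈ Set.Icc (-(2 * A)) (2 * A) := abs_le.1 <|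
    (abs_sub _ _).trans ((add_le_add (hA n _) (hA 0 _)).trans_eq (two_mul A).symm)
  have hQ : MemLp Q 2 μ := memLp_of_bounded (ae_of_all _ hQA) hQm.aestronglyMeasurable 2
  have hT : MemLp T 2 μ := memLp_finsetSum' _ fun j _ ↦ hM.memLp hX 2 j
  have hR : MemLp R 2 μ := hf₀.add hQ
  have hQvar : Var[Q; μ] ≤ (2 * A) ^ 2 := by
    convert variance_le_sq_of_bounded (ae_of_all μ hQA) hQm.aemeasurable using 2
    ring
  have hSvar : Var[S; μ] = Var[T + R; μ] := by
    rw [← variance_add_const (hT.add hR).aestronglyMeasurable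
      (∑ j ∈ Finset.range n, ∫ ω', f (j + 1) (X (j + 1) ω') ∂μ)]
    refine variance_congr ?_
    filter_upwards [hM.sum_range_succ_ae_eq n] with ω hω
    simpa only [S, T, R, Q, Pi.add_apply, Finset.sum_apply] using hω
  have hTvar : Var[T; μ] ≤ 2 * Var[S; μ] + 2 * Var[R; μ] := by
    simpa only [hSvar, add_sub_cancel_right] using variance_sub_le_two_mul (hT.add hR) hR
  rw [← hM.variance_sum_range hX]
  constructor <;> linarith [variance_add_le_two_mul hT hR, variance_add_le_two_mul hf₀ hQ]

lemma tfae_bounded_liminf_summable_variance (hM : IsMartingaleCoboundary μ X f h M)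
    (hX : ∀ j, Measurable (X j)) (hf₀ : MemLp (fun ω ↦ f 0 (X 0 ω)) 2 μ) :
    List.TFAE [∃ B, ∀ n, √Var[fun ω ↦ ∑ j ∈ Finset.range n, f j (X j ω); μ] ≤ B,
      atTop.liminf (fun n ↦ ENNReal.ofReal √Var[fun ω ↦ ∑ j ∈ Finset.range n, f j (X j ω); μ]) < ⊤,
      Summable fun j ↦ Var[fun ω ↦ M j (X j ω, X (j + 1) ω); μ]] := by
  obtain ⟨K, hK⟩ := hM.exists_variance_le hX hf₀
  exact tfae_bounded_sqrt_liminf_summable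
    (v := fun n ↦ Var[fun ω ↦ ∑ j ∈ Finset.range n, f j (X j ω); μ]) (fun _ ↦ variance_nonneg _ _)
    (fun n ↦ (hK n).1) fun n ↦ (hK n).2

end IsMartingaleCoboundary

end MartingaleCoboundary

/-- **Theorem (variance dichotomy under Doeblin minorization).**
Let `(X_j)` be an inhomogeneous Markov chain satisfying the uniform Doeblin minorization
condition `P_{j,n₀}(x,Γ) ≥ γ m_{j+n₀}(Γ)`, and let `Y_j = f_j(X_j)` be uniformly bounded.
With `S_n = Σ_{j<n} Y_j` and `σ_n = √Var(S_n)`, the following are equivalent: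
(i) `σ_n` is bounded; (ii) `liminf σ_n < ∞`; (iii) `f_j(X_j) - E[f_j(X_j)]` admits a
martingale–coboundary decomposition with uniformly bounded `h_j`, uniformly bounded
martingale differences `M_j`, and `Σ_j Var(M_j(X_{j-1},X_j)) < ∞`. -/
theorem variance_dichotomy_doeblin
    (μ : Measure Ω) [IsProbabilityMeasure μ]
    (X : ∀ j, Ω → 𝒳 j) (κ : ∀ j n, Kernel (𝒳 j) (𝒳 (j + n)))
    (hMarkov : IsInhomMarkov μ X κ)
    (n₀ : ℕ) (hn₀ : 0 < n₀) (γ : ℝ) (hγ : γ ∈ Set.Ioo (0 : ℝ) 1)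
    (m : ∀ j, Measure (𝒳 j)) (hm : ∀ j, IsProbabilityMeasure (m j))
    (hDoeblin : ∀ j (x : 𝒳 j) (Γ : Set (𝒳 (j + n₀))), MeasurableSet Γ →
      ENNReal.ofReal γ * m (j + n₀) Γ ≤ κ j n₀ x Γ)
    (f : ∀ j, 𝒳 j → ℝ) (hfmeas : ∀ j, Measurable (f j))
    (C : ℝ) (hbdd : ∀ j, ∀ᵐ ω ∂μ, |f j (X j ω)| ≤ C)
    (S : ℕ → Ω → ℝ) (hS : ∀ n ω, S n ω = ∑ j ∈ Finset.range n, f j (X j ω))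
    (σs : ℕ → ℝ) (hσ : ∀ n, σs n = Real.sqrt (variance (S n) μ)) :
    ((∃ B, ∀ n, σs n ≤ B) ↔
        atTop.liminf (fun n => (ENNReal.ofReal (σs n))) < ⊤) ∧
    ((∃ B, ∀ n, σs n ≤ B) ↔
      ∃ (h : ∀ j, 𝒳 j → ℝ) (M : ∀ j, 𝒳 j × 𝒳 (j + 1) → ℝ),
        (∀ j, Measurable (h j)) ∧ (∃ B, ∀ j x, |h j x| ≤ B) ∧
        (∀ j, Measurable (M j)) ∧ (∃ B, ∀ j y, |M j y| ≤ B) ∧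
        -- `M_j(X_{j-1}, X_j)` is a martingale difference w.r.t. the natural filtration
        (∀ j, (μ[(fun ω => M j (X j ω, X (j + 1) ω)) | pastSigma X j]) =ᵐ[μ] 0) ∧
        (Summable fun j => variance (fun ω => M j (X j ω, X (j + 1) ω)) μ) ∧
        (∀ j, ∀ᵐ ω ∂μ,
          f (j + 1) (X (j + 1) ω) =
            (∫ ω', f (j + 1) (X (j + 1) ω') ∂μ) + h (j + 1) (X (j + 1) ω)
              - h j (X j ω) + M j (X j ω, X (j + 1) ω))) := by
  obtain rfl : S = fun n ω ↦ ∑ j ∈ Finset.range n, f j (X j ω) := funext fun n ↦ funext (hS n)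
  obtain rfl : σs = fun n ↦ √Var[fun ω ↦ ∑ j ∈ Finset.range n, f j (X j ω); μ] := funext hσ
  have hX := hMarkov.meas
  have hfp (p : ℝ≥0∞) (j : ℕ) : MemLp (fun ω ↦ f j (X j ω)) p μ :=
    .of_bound ((hfmeas j).comp (hX j)).aestronglyMeasurable C (hbdd j)
  have hminor (j : ℕ) (x : 𝒳 j) : ENNReal.ofReal γ • m (j + n₀) ≤ κ j n₀ x :=
    Measure.le_iff.2 (hDoeblin j x)
  have htfae {h M} (hM : IsMartingaleCoboundary μ X f h M) :=
    hM.tfae_bounded_liminf_summable_variance hX (hfp 2 0)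
  obtain ⟨r, hr, hversion⟩ :=
    hMarkov.exists_summable_forall_condExp_version hn₀.ne' hγ hminor hfmeas hbdd
  choose φ hφ hφr hφf using hversion
  obtain ⟨h, M, hM⟩ := exists_isMartingaleCoboundary hX hfmeas
    (fun j ↦ (hfp 1 j).integrable le_rfl) hr hφ hφr hφf
  refine ⟨(htfae hM).out 0 1, fun hB ↦ ⟨h, M, hM.measurable_h, hM.bounded_h, hM.measurable_M,
    hM.bounded_M, hM.condExp_ae_eq_zero, ((htfae hM).out 0 2).1 hB, hM.ae_eq⟩, ?_⟩
  rintro ⟨h, M, hh, hhB, hMm, hMB, hM0, hMsum, hMf⟩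
  exact ((htfae ⟨hh, hhB, hMm, hMB, hM0, hMf⟩).out 0 2).2 hMsum

end
end

section
/- Suppose that for ℙ-a.e. ω and all n, sup_x sup_Γ |P_{θ^{−n}ω,n}(x,Γ) − μ_ω(Γ)| ≤ K(ω) a_n with K ∈ L^d(ℙ), where a_n = n^{−β} (case (i)) or a_n = e^{−n^κ} (case (ii)). Then: (i) in the polynomial case, for every ε > 1/d the random variable K̃_ε(ω) = sup_{n≥1} n^{−ε} K(θ^n ω) satisfies K̃_ε ∈ L^d(ℙ) and for ℙ-a.e. ω and all n, sup_x sup_Γ |P_{ω,n}(x,Γ) − μ_{θ^n ω}(Γ)| ≤ K̃_ε(ω) n^{−β+ε}; (ii) in the stretched-exponential case with K ∈ L^q for all q ≥ 1, for every q > 1 and κ′ < κ there exists K̃ ∈ L^q(ℙ) such that for ℙ-a.e. ω and all n, sup_x sup_Γ |P_{ω,n}(x,Γ) − μ_{θ^n ω}(Γ)| ≤ K̃(ω) e^{−n^{κ′}}. -/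
open MeasureTheory ProbabilityTheory Filter
open scoped ENNReal NNReal

noncomputable section

/-- The `n`-step transition kernels `P_{ω,n} = P_ω ∘ P_{θω} ∘ ⋯ ∘ P_{θ^{n−1}ω}` of a Markov
chain in the random environment `ω` (first apply `P_ω`, then the kernels over the shifted
environments). -/
noncomputable def envKernel {Ω 𝒳 : Type*} [MeasurableSpace Ω] [MeasurableSpace 𝒳]
    (θ : Ω → Ω) (P : Ω → Kernel 𝒳 𝒳) : ℕ → Ω → Kernel 𝒳 𝒳
  | 0, _ => Kernel.id
  | n + 1, ω => (envKernel θ P n (θ ω)) ∘ₖ (P ω)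

/-- Strong mixing of the map `θ` with respect to `ℙ`. -/
def StrongMixing {Ω : Type*} [MeasurableSpace Ω] (Pr : Measure Ω) (θ : Ω → Ω) : Prop :=
  ∀ A B : Set Ω, MeasurableSet A → MeasurableSet B →
    Tendsto (fun n => Pr (A ∩ θ^[n] ⁻¹' B)) atTop (nhds (Pr A * Pr B))

/-! Replacing `ω` by `θ^n ω` turns the backward bound into a forward bound with constant
`K(θ^n ω)`, and `K(θ^n ω) ≤ n^ε K̃_ε(ω)` with `K̃_ε(ω) = sup_{k ≥ 1} k^{-ε} K(θ^k ω)`.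
Bounding the supremum by the `ℓ^d` norm gives `𝔼 |K̃_ε|^d ≤ ∑ k^{-εd} 𝔼 |K|^d`, which is
finite when `εd > 1`. The factor `n^ε` lowers a polynomial rate by `ε` and is absorbed by any
smaller stretched exponent. -/

section CountableSupremum

variable {Ω ι : Type*} [MeasurableSpace Ω] {μ : Measure Ω} {p : ℝ≥0∞} {f : ι → Ω → ℝ}

theorem enorm_iSup_le_iSup_enorm (u : ι → ℝ) : ‖⨆ i, u i‖ₑ ≤ ⨆ i, ‖u i‖ₑ := by
  rcases eq_or_ne (⨆ i, ‖u i‖ₑ) ∞ with htop | hfin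
  · exact htop ▸ le_top
  have habs (i : ι) : |u i| ≤ (⨆ i, ‖u i‖ₑ).toReal := by
    rw [← Real.norm_eq_abs, ← toReal_enorm]
    exact ENNReal.toReal_mono hfin (le_iSup (fun i => ‖u i‖ₑ) i)
  rw [Real.enorm_eq_ofReal_abs, ENNReal.ofReal_le_iff_le_toReal hfin, abs_le]
  refine ⟨?_, Real.iSup_le (fun i => (le_abs_self _).trans (habs i)) ENNReal.toReal_nonneg⟩
  rcases isEmpty_or_nonempty ι with _ | ⟨⟨i⟩⟩
  · simp
  · exact (abs_le.1 (habs i)).1.trans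
      (le_ciSup ⟨_, Set.forall_mem_range.2 fun j => (le_abs_self _).trans (habs j)⟩ i)

theorem bddAbove_range_of_tsum_enorm_rpow_ne_top {u : ι → ℝ} {r : ℝ} (hr : 0 < r)
    (hu : ∑' i, ‖u i‖ₑ ^ r ≠ ∞) : BddAbove (Set.range u) := by
  refine ⟨((∑' i, ‖u i‖ₑ ^ r) ^ r⁻¹).toReal, Set.forall_mem_range.2 fun i => ?_⟩
  have hle : ‖u i‖ₑ ≤ (∑' i, ‖u i‖ₑ ^ r) ^ r⁻¹ :=
    (ENNReal.le_rpow_inv_iff hr).2 (ENNReal.le_tsum i)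
  have hfin : (∑' i, ‖u i‖ₑ ^ r) ^ r⁻¹ ≠ ∞ := ENNReal.rpow_ne_top_of_nonneg (by positivity) hu
  calc u i ≤ ‖u i‖ₑ.toReal := by
        rw [toReal_enorm]
        exact Real.le_norm_self (u i)
    _ ≤ _ := ENNReal.toReal_mono hfin hle

theorem lintegral_enorm_rpow_toReal (hp₀ : p ≠ 0) (hp : p ≠ ∞) {F : Type*} [ENorm F]
    (g : Ω → F) :
    ∫⁻ ω, ‖g ω‖ₑ ^ p.toReal ∂μ = eLpNorm g p μ ^ p.toReal := by
  rw [eLpNorm_eq_eLpNorm' hp₀ hp, lintegral_rpow_enorm_eq_rpow_eLpNorm' (ENNReal.toReal_pos hp₀ hp)]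

variable [Countable ι]

theorem lintegral_tsum_enorm_rpow_toReal (hp₀ : p ≠ 0) (hp : p ≠ ∞) {F : Type*}
    [TopologicalSpace F] [ContinuousENorm F] {g : ι → Ω → F}
    (hg : ∀ i, AEStronglyMeasurable (g i) μ) :
    ∫⁻ ω, ∑' i, ‖g i ω‖ₑ ^ p.toReal ∂μ = ∑' i, eLpNorm (g i) p μ ^ p.toReal := by
  rw [lintegral_tsum fun i => (hg i).enorm.pow_const _]
  simp only [lintegral_enorm_rpow_toReal hp₀ hp]

theorem memLp_iSup_of_tsum_eLpNorm_rpow_ne_top (hp₀ : p ≠ 0) (hp : p ≠ ∞)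
    (hf : ∀ i, AEStronglyMeasurable (f i) μ) (hsum : ∑' i, eLpNorm (f i) p μ ^ p.toReal ≠ ∞) :
    MemLp (fun ω => ⨆ i, f i ω) p μ := by
  refine ⟨(AEMeasurable.iSup fun i => (hf i).aemeasurable).aestronglyMeasurable, ?_⟩
  rw [eLpNorm_lt_top_iff_lintegral_rpow_enorm_lt_top hp₀ hp]
  have hpos : 0 < p.toReal := ENNReal.toReal_pos hp₀ hp
  have hle (ω : Ω) : ‖⨆ i, f i ω‖ₑ ^ p.toReal ≤ ∑' i, ‖f i ω‖ₑ ^ p.toReal := by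
    rw [← ENNReal.le_rpow_inv_iff hpos]
    refine (enorm_iSup_le_iSup_enorm _).trans (iSup_le fun i => ?_)
    exact (ENNReal.le_rpow_inv_iff hpos).2 (ENNReal.le_tsum i)
  calc ∫⁻ ω, ‖⨆ i, f i ω‖ₑ ^ p.toReal ∂μ
      ≤ ∫⁻ ω, ∑' i, ‖f i ω‖ₑ ^ p.toReal ∂μ := lintegral_mono hle
    _ = ∑' i, eLpNorm (f i) p μ ^ p.toReal := lintegral_tsum_enorm_rpow_toReal hp₀ hp hf
    _ < ∞ := hsum.lt_top

theorem ae_bddAbove_range_of_tsum_eLpNorm_rpow_ne_top (hp₀ : p ≠ 0) (hp : p ≠ ∞)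
    (hf : ∀ i, AEStronglyMeasurable (f i) μ) (hsum : ∑' i, eLpNorm (f i) p μ ^ p.toReal ≠ ∞) :
    ∀ᵐ ω ∂μ, BddAbove (Set.range fun i => f i ω) := by
  have hmeas : AEMeasurable (fun ω => ∑' i, ‖f i ω‖ₑ ^ p.toReal) μ :=
    .tsum fun i => (hf i).enorm.pow_const _
  rw [← lintegral_tsum_enorm_rpow_toReal hp₀ hp hf] at hsum
  filter_upwards [ae_lt_top' hmeas hsum] with ω hω
  exact bddAbove_range_of_tsum_enorm_rpow_ne_top (ENNReal.toReal_pos hp₀ hp) hω.ne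

end CountableSupremum

section Orbit

variable {Ω : Type*}

/-- The random variable `K̃_ε(ω) = sup_{n ≥ 1} n^{-ε} K(θ^n ω)`, controlling the growth of `K` along
the forward orbit of `ω`. The supremum is taken in `ℝ`, so it is `0` where the weighted orbit is
unbounded above. -/
def discountedOrbitSup (θ : Ω → Ω) (ε : ℝ) (K : Ω → ℝ) (ω : Ω) : ℝ :=
  sSup {c : ℝ | ∃ n : ℕ, 1 ≤ n ∧ c = (n : ℝ) ^ (-ε) * K (θ^[n] ω)}

theorem discountedOrbitSup_eq_iSup (θ : Ω → Ω) (ε : ℝ) (K : Ω → ℝ) (ω : Ω) :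
    discountedOrbitSup θ ε K ω = ⨆ n : ℕ+, (n : ℝ) ^ (-ε) * K (θ^[n] ω) := by
  refine congrArg sSup (Set.ext fun c => ⟨?_, ?_⟩)
  · rintro ⟨n, hn, rfl⟩
    exact ⟨⟨n, hn⟩, rfl⟩
  · rintro ⟨n, rfl⟩
    exact ⟨n, n.pos, rfl⟩

variable [MeasurableSpace Ω] {μ : Measure Ω} {θ θinv : Ω → Ω} {K : Ω → ℝ} {d ε : ℝ}

theorem ae_forall_iterate_of_ae_forall_leftInverse_iterate
    (hθ : Measure.QuasiMeasurePreserving θ μ μ) (hinv : Function.LeftInverse θinv θ)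
    {r : ℕ → Ω → Ω → Prop} (h : ∀ᵐ ω ∂μ, ∀ n, r n (θinv^[n] ω) ω) :
    ∀ᵐ ω ∂μ, ∀ n, r n ω (θ^[n] ω) := by
  refine ae_all_iff.2 fun n => ?_
  filter_upwards [(hθ.iterate n).ae h] with ω hω
  simpa only [hinv.iterate n ω] using hω n

theorem eLpNorm_const_mul_comp_iterate (hθ : MeasurePreserving θ μ μ) {p : ℝ≥0∞}
    (hK : AEStronglyMeasurable K μ) (c : ℝ) (n : ℕ) :
    eLpNorm (fun ω => c * K (θ^[n] ω)) p μ = ‖c‖ₑ * eLpNorm K p μ := by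
  rw [← eLpNorm_comp_measurePreserving hK (hθ.iterate n)]
  exact eLpNorm_const_smul c (K ∘ θ^[n]) p μ

theorem aestronglyMeasurable_const_mul_comp_iterate (hθ : Measure.QuasiMeasurePreserving θ μ μ)
    (hK : AEStronglyMeasurable K μ) (c : ℝ) (n : ℕ) :
    AEStronglyMeasurable (fun ω => c * K (θ^[n] ω)) μ :=
  (hK.comp_quasiMeasurePreserving (hθ.iterate n)).const_mul c

theorem tsum_enorm_natCast_rpow_neg_rpow_ne_top (hd : 0 < d) (hε : 1 / d < ε) :
    ∑' n : ℕ+, ‖(n : ℝ) ^ (-ε)‖ₑ ^ d ≠ ∞ := by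
  have hexp : -(ε * d) < -1 := neg_lt_neg ((div_lt_iff₀ hd).1 hε)
  have hsummable : Summable fun n : ℕ+ => (n : ℝ) ^ (-(ε * d)) :=
    (Real.summable_nat_rpow.2 hexp).comp_injective PNat.coe_injective
  have hterm (n : ℕ+) : ‖(n : ℝ) ^ (-ε)‖ₑ ^ d = ENNReal.ofReal ((n : ℝ) ^ (-(ε * d))) := by
    rw [Real.enorm_of_nonneg (by positivity), ENNReal.ofReal_rpow_of_nonneg (by positivity) hd.le,
      ← Real.rpow_mul (by positivity), neg_mul]
  simp only [hterm]
  exact hsummable.tsum_ofReal_ne_top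

theorem tsum_eLpNorm_discounted_orbit_ne_top (hθ : MeasurePreserving θ μ μ) (hd : 0 < d)
    (hε : 1 / d < ε) (hK : MemLp K (ENNReal.ofReal d) μ) :
    ∑' n : ℕ+, eLpNorm (fun ω => (n : ℝ) ^ (-ε) * K (θ^[n] ω)) (ENNReal.ofReal d) μ
      ^ (ENNReal.ofReal d).toReal ≠ ∞ := by
  simp only [eLpNorm_const_mul_comp_iterate hθ hK.1, ENNReal.toReal_ofReal hd.le,
    ENNReal.mul_rpow_of_nonneg _ _ hd.le, ENNReal.tsum_mul_right]
  exact ENNReal.mul_ne_top (tsum_enorm_natCast_rpow_neg_rpow_ne_top hd hε)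
    (ENNReal.rpow_ne_top_of_nonneg hd.le hK.2.ne)

theorem memLp_discountedOrbitSup (hθ : MeasurePreserving θ μ μ) (hd : 0 < d) (hε : 1 / d < ε)
    (hK : MemLp K (ENNReal.ofReal d) μ) :
    MemLp (discountedOrbitSup θ ε K) (ENNReal.ofReal d) μ := by
  simp only [funext (discountedOrbitSup_eq_iSup θ ε K)]
  exact memLp_iSup_of_tsum_eLpNorm_rpow_ne_top (ENNReal.ofReal_pos.2 hd).ne' ENNReal.ofReal_ne_top
    (fun n => aestronglyMeasurable_const_mul_comp_iterate hθ.quasiMeasurePreserving hK.1 _ n)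
    (tsum_eLpNorm_discounted_orbit_ne_top hθ hd hε hK)

theorem ae_le_rpow_mul_discountedOrbitSup (hθ : MeasurePreserving θ μ μ) (hd : 0 < d)
    (hε : 1 / d < ε) (hK : MemLp K (ENNReal.ofReal d) μ) :
    ∀ᵐ ω ∂μ, ∀ n : ℕ, 1 ≤ n → K (θ^[n] ω) ≤ (n : ℝ) ^ ε * discountedOrbitSup θ ε K ω := by
  have hbdd := ae_bddAbove_range_of_tsum_eLpNorm_rpow_ne_top (ENNReal.ofReal_pos.2 hd).ne'
    ENNReal.ofReal_ne_top
    (fun n : ℕ+ => aestronglyMeasurable_const_mul_comp_iterate hθ.quasiMeasurePreserving hK.1 _ n)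
    (tsum_eLpNorm_discounted_orbit_ne_top hθ hd hε hK)
  filter_upwards [hbdd] with ω hω n hn
  have hle : (n : ℝ) ^ (-ε) * K (θ^[n] ω) ≤ discountedOrbitSup θ ε K ω :=
    discountedOrbitSup_eq_iSup θ ε K ω ▸ le_ciSup hω ⟨n, hn⟩
  rwa [Real.rpow_neg n.cast_nonneg, inv_mul_le_iff₀ (by positivity)] at hle

theorem ae_forward_bound_of_ae_backward_bound (hθ : MeasurePreserving θ μ μ)
    (hinv : Function.LeftInverse θinv θ) (hd : 0 < d) (hε : 1 / d < ε)
    (hK : MemLp K (ENNReal.ofReal d) μ) {E : ℕ → Ω → Ω → Set ℝ} {a : ℕ → ℝ} (ha : ∀ n, 0 ≤ a n)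
    (hback : ∀ᵐ ω ∂μ, ∀ n : ℕ, 1 ≤ n → K ω * a n ∈ upperBounds (E n (θinv^[n] ω) ω)) :
    ∀ᵐ ω ∂μ, ∀ n : ℕ, 1 ≤ n →
      discountedOrbitSup θ ε K ω * ((n : ℝ) ^ ε * a n) ∈ upperBounds (E n ω (θ^[n] ω)) := by
  have hforward := ae_forall_iterate_of_ae_forall_leftInverse_iterate
    (r := fun n ω ω' => 1 ≤ n → K ω' * a n ∈ upperBounds (E n ω ω'))
    hθ.quasiMeasurePreserving hinv hback
  filter_upwards [hforward, ae_le_rpow_mul_discountedOrbitSup hθ hd hε hK] with ω hE hle n hn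
  refine upperBounds_mono_mem ?_ (hE n hn)
  calc K (θ^[n] ω) * a n
      ≤ (n : ℝ) ^ ε * discountedOrbitSup θ ε K ω * a n :=
        mul_le_mul_of_nonneg_right (hle n hn) (ha n)
    _ = discountedOrbitSup θ ε K ω * ((n : ℝ) ^ ε * a n) := by ring

end Orbit

section StretchedExponential

open Asymptotics

theorem isLittleO_rpow_rpow_atTop {s t : ℝ} (hst : s < t) :
    (fun x : ℝ => x ^ s) =o[atTop] fun x => x ^ t := by
  refine isLittleO_of_tendsto' ?_ ((tendsto_rpow_neg_atTop (sub_pos.2 hst)).congr' ?_)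
  · filter_upwards [eventually_gt_atTop 0] with x hx hzero
    exact absurd hzero (Real.rpow_pos_of_pos hx t).ne'
  · filter_upwards [eventually_gt_atTop 0] with x hx
    rw [neg_sub, Real.rpow_sub hx]

theorem isBigO_rpow_mul_exp_neg_rpow (ε : ℝ) {κ κ' : ℝ} (hκ : 0 < κ) (hκ' : κ' < κ) :
    (fun x : ℝ => x ^ ε * Real.exp (-x ^ κ)) =O[atTop] fun x => Real.exp (-x ^ κ') := by
  have hexponent : (fun x => ε * Real.log x + x ^ κ') =o[atTop] fun x : ℝ => x ^ κ :=
    ((isLittleO_log_rpow_atTop hκ).const_mul_left ε).add (isLittleO_rpow_rpow_atTop hκ')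
  refine .of_bound 1 ?_
  filter_upwards [hexponent.bound one_pos, eventually_gt_atTop 0] with x hx hpos
  rw [one_mul, Real.norm_of_nonneg (Real.rpow_pos_of_pos hpos κ).le] at hx
  rw [one_mul, Real.norm_of_nonneg (by positivity), Real.norm_of_nonneg (by positivity),
    Real.rpow_def_of_pos hpos, ← Real.exp_add, Real.exp_le_exp]
  linarith [(le_abs_self _).trans hx]

theorem exists_forall_natCast_rpow_mul_exp_neg_rpow_le (ε : ℝ) {κ κ' : ℝ} (hκ : 0 < κ)
    (hκ' : κ' < κ) :
    ∃ C : ℝ, ∀ n : ℕ, (n : ℝ) ^ ε * Real.exp (-(n : ℝ) ^ κ) ≤ C * Real.exp (-(n : ℝ) ^ κ') := by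
  obtain ⟨C, -, hC⟩ := bound_of_isBigO_nat_atTop
    ((isBigO_rpow_mul_exp_neg_rpow ε hκ hκ').comp_tendsto tendsto_natCast_atTop_atTop)
  refine ⟨C, fun n => (le_abs_self _).trans ?_⟩
  simpa only [Function.comp_apply, Real.norm_eq_abs, Real.abs_exp] using
    hC (Real.exp_ne_zero (-(n : ℝ) ^ κ'))

end StretchedExponential

section Kernels

variable {𝒳 𝒴 : Type*} [MeasurableSpace 𝒳] [MeasurableSpace 𝒴]

/-- The deviations `|k(x, Γ) - ν(Γ)|` over `x ∈ A` and measurable `Γ ⊆ B`. The estimate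
`sup_x sup_Γ |k(x, Γ) - ν(Γ)| ≤ r` is encoded as `r ∈ upperBounds (deviations k ν A B)`. -/
def deviations (k : Kernel 𝒳 𝒴) (ν : Measure 𝒴) (A : Set 𝒳) (B : Set 𝒴) : Set ℝ :=
  {c | ∃ x ∈ A, ∃ Γ, MeasurableSet Γ ∧ Γ ⊆ B ∧ c = |(k x Γ).toReal - (ν Γ).toReal|}

theorem mem_upperBounds_deviations {k : Kernel 𝒳 𝒴} {ν : Measure 𝒴} {A : Set 𝒳} {B : Set 𝒴}
    {r : ℝ} :
    r ∈ upperBounds (deviations k ν A B) ↔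
      ∀ x ∈ A, ∀ Γ, MeasurableSet Γ → Γ ⊆ B → |(k x Γ).toReal - (ν Γ).toReal| ≤ r := by
  constructor
  · intro hr x hx Γ hΓ hΓB
    exact hr ⟨x, hx, Γ, hΓ, hΓB, rfl⟩
  · rintro hr _ ⟨x, hx, Γ, hΓ, hΓB, rfl⟩
    exact hr x hx Γ hΓ hΓB

end Kernels

/-- `E n ω ω'` plays the role of the set of deviations `|P_{ω,n}(x, Γ) - μ_{ω'}(Γ)|`. -/
theorem forward_effective_rates_general {Ω : Type*} [MeasurableSpace Ω] {μ : Measure Ω}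
    {θ θinv : Ω → Ω} (hθ : MeasurePreserving θ μ μ) (hinv : Function.LeftInverse θinv θ)
    (E : ℕ → Ω → Ω → Set ℝ) :
    (∀ (β d : ℝ) (K : Ω → ℝ), 0 < d → MemLp K (ENNReal.ofReal d) μ →
      (∀ᵐ ω ∂μ, ∀ n : ℕ, 1 ≤ n →
        K ω * (n : ℝ) ^ (-β) ∈ upperBounds (E n (θinv^[n] ω) ω)) →
      ∀ ε : ℝ, 1 / d < ε →
        MemLp (discountedOrbitSup θ ε K) (ENNReal.ofReal d) μ ∧
        ∀ᵐ ω ∂μ, ∀ n : ℕ, 1 ≤ n →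
          discountedOrbitSup θ ε K ω * (n : ℝ) ^ (-β + ε) ∈ upperBounds (E n ω (θ^[n] ω))) ∧
    (∀ (κ q : ℝ) (K : Ω → ℝ), 0 < κ → 0 < q → MemLp K (ENNReal.ofReal q) μ →
      (∀ᵐ ω ∂μ, ∀ n : ℕ, 1 ≤ n →
        K ω * Real.exp (-(n : ℝ) ^ κ) ∈ upperBounds (E n (θinv^[n] ω) ω)) →
      ∀ κ' : ℝ, κ' < κ →
        ∃ Ktil : Ω → ℝ, MemLp Ktil (ENNReal.ofReal q) μ ∧
          ∀ᵐ ω ∂μ, ∀ n : ℕ, 1 ≤ n →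
            Ktil ω * Real.exp (-(n : ℝ) ^ κ') ∈ upperBounds (E n ω (θ^[n] ω))) := by
  refine ⟨fun β d K hd hK hback ε hε => ⟨memLp_discountedOrbitSup hθ hd hε hK, ?_⟩,
    fun κ q K hκ hq hK hback κ' hκ' => ?_⟩
  · filter_upwards [ae_forward_bound_of_ae_backward_bound hθ hinv hd hε hK
      (fun n => by positivity) hback] with ω hω n hn
    have hn_pos : (0 : ℝ) < n := Nat.cast_pos.2 hn
    rw [add_comm, Real.rpow_add hn_pos]
    exact hω n hn
  · have hε : 1 / q < 1 / q + 1 := lt_add_one _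
    obtain ⟨C, hC⟩ := exists_forall_natCast_rpow_mul_exp_neg_rpow_le (1 / q + 1) hκ hκ'
    refine ⟨fun ω => |discountedOrbitSup θ (1 / q + 1) K ω| * C,
      (memLp_discountedOrbitSup hθ hq hε hK).abs.mul_const C, ?_⟩
    filter_upwards [ae_forward_bound_of_ae_backward_bound hθ hinv hq hε hK
      (fun n => (Real.exp_pos _).le) hback] with ω hω n hn
    refine upperBounds_mono_mem ?_ (hω n hn)
    calc discountedOrbitSup θ (1 / q + 1) K ω * ((n : ℝ) ^ (1 / q + 1) * Real.exp (-(n : ℝ) ^ κ))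
        ≤ |discountedOrbitSup θ (1 / q + 1) K ω| * (C * Real.exp (-(n : ℝ) ^ κ')) :=
          mul_le_mul (le_abs_self _) (hC n) (by positivity) (abs_nonneg _)
      _ = |discountedOrbitSup θ (1 / q + 1) K ω| * C * Real.exp (-(n : ℝ) ^ κ') := by ring

/-- **Corollary (from backward to forward effective convergence rates).**
Suppose that a.s. `sup_x sup_Γ |P_{θ^{−n}ω,n}(x,Γ) − μ_ω(Γ)| ≤ K(ω) a_n`.  Then:
(i) in the polynomial case `a_n = n^{−β}` with `K ∈ L^d`, for every `ε > 1/d` the random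
variable `K̃_ε(ω) = sup_{n≥1} n^{−ε} K(θ^n ω)` lies in `L^d` and a.s.
`sup_x sup_Γ |P_{ω,n}(x,Γ) − μ_{θ^n ω}(Γ)| ≤ K̃_ε(ω) n^{−β+ε}`;
(ii) in the stretched exponential case `a_n = e^{−n^κ}` with `K ∈ ⋂_q L^q`, for every
`q > 1` and `κ' < κ` there is `K̃ ∈ L^q` with a.s.
`sup_x sup_Γ |P_{ω,n}(x,Γ) − μ_{θ^n ω}(Γ)| ≤ K̃(ω) e^{−n^{κ'}}`. -/
theorem forward_effective_rates
    {Ω 𝒳 : Type*} [MeasurableSpace Ω] [MeasurableSpace 𝒳]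
    (Pr : Measure Ω) [IsProbabilityMeasure Pr]
    (θ θinv : Ω → Ω)
    (hθ : MeasurePreserving θ Pr Pr) (hθinv : MeasurePreserving θinv Pr Pr)
    (hinv₁ : Function.LeftInverse θinv θ) (hinv₂ : Function.RightInverse θinv θ)
    (Xs : Ω → Set 𝒳) (hXs : MeasurableSet {p : Ω × 𝒳 | p.2 ∈ Xs p.1})
    (P : Ω → Kernel 𝒳 𝒳) (hPMarkov : ∀ ω, IsMarkovKernel (P ω))
    (hPmeas : ∀ Γ : Set 𝒳, MeasurableSet Γ → Measurable fun p : Ω × 𝒳 => P p.1 p.2 Γ)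
    (hPfib : ∀ᵐ ω ∂Pr, ∀ x ∈ Xs ω, P ω x (Xs (θ ω)) = 1)
    (μs : Ω → Measure 𝒳) (hμs : ∀ ω, IsProbabilityMeasure (μs ω))
    (hμs_meas : ∀ Γ : Set 𝒳, MeasurableSet Γ → Measurable fun ω => μs ω Γ) :
    -- (i) polynomial case
    (∀ (β d : ℝ) (K : Ω → ℝ), 0 < β → 1 ≤ d → (∀ ω, 0 ≤ K ω) →
      MemLp K (ENNReal.ofReal d) Pr →
      (∀ᵐ ω ∂Pr, ∀ n : ℕ, 1 ≤ n →
        ∀ x ∈ Xs (θinv^[n] ω), ∀ Γ : Set 𝒳, MeasurableSet Γ → Γ ⊆ Xs ω →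
          |(envKernel θ P n (θinv^[n] ω) x Γ).toReal - (μs ω Γ).toReal|
            ≤ K ω * (n : ℝ) ^ (-β)) →
      ∀ ε : ℝ, 1 / d < ε →
        MemLp (fun ω => sSup {c : ℝ | ∃ n : ℕ, 1 ≤ n ∧ c = (n : ℝ) ^ (-ε) * K (θ^[n] ω)})
          (ENNReal.ofReal d) Pr ∧
        ∀ᵐ ω ∂Pr, ∀ n : ℕ, 1 ≤ n →
          ∀ x ∈ Xs ω, ∀ Γ : Set 𝒳, MeasurableSet Γ → Γ ⊆ Xs (θ^[n] ω) →
            |(envKernel θ P n ω x Γ).toReal - (μs (θ^[n] ω) Γ).toReal|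
              ≤ sSup {c : ℝ | ∃ k : ℕ, 1 ≤ k ∧ c = (k : ℝ) ^ (-ε) * K (θ^[k] ω)}
                  * (n : ℝ) ^ (-β + ε)) ∧
    -- (ii) stretched exponential case
    (∀ (κ : ℝ) (K : Ω → ℝ), 0 < κ → (∀ ω, 0 ≤ K ω) →
      (∀ q : ℝ, 1 ≤ q → MemLp K (ENNReal.ofReal q) Pr) →
      (∀ᵐ ω ∂Pr, ∀ n : ℕ, 1 ≤ n →
        ∀ x ∈ Xs (θinv^[n] ω), ∀ Γ : Set 𝒳, MeasurableSet Γ → Γ ⊆ Xs ω →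
          |(envKernel θ P n (θinv^[n] ω) x Γ).toReal - (μs ω Γ).toReal|
            ≤ K ω * Real.exp (-(n : ℝ) ^ κ)) →
      ∀ q κ' : ℝ, 1 < q → 0 < κ' → κ' < κ →
        ∃ Ktil : Ω → ℝ, MemLp Ktil (ENNReal.ofReal q) Pr ∧
          ∀ᵐ ω ∂Pr, ∀ n : ℕ, 1 ≤ n →
            ∀ x ∈ Xs ω, ∀ Γ : Set 𝒳, MeasurableSet Γ → Γ ⊆ Xs (θ^[n] ω) →
              |(envKernel θ P n ω x Γ).toReal - (μs (θ^[n] ω) Γ).toReal|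
                ≤ Ktil ω * Real.exp (-(n : ℝ) ^ κ')) := by
  have rates := forward_effective_rates_general hθ hinv₁ fun n ω ω' =>
    deviations (envKernel θ P n ω) (μs ω') (Xs ω) (Xs ω')
  simp only [mem_upperBounds_deviations] at rates
  exact ⟨fun β d K _ hd _ => rates.1 β d K (one_pos.trans_le hd), fun κ K hκ _ hK h q κ' hq _ hκ' =>
    rates.2 κ q K hκ (one_pos.trans hq) (hK q hq.le) h κ' hκ'⟩

end
end
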